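/- arXiv:1309.0416 — 4 statements merged into one kernel-verified Lean document; each statement's English description precedes it below -/
import Mathlib

section
/- Distinguishing homomorphisms do not compose in general: there exist finite graphs G, H, K and homomorphisms f : G → H and g : H → K such that f and g are both distinguishing homomorphisms but the composition g ∘ f : G → K is not a distinguishing homomorphism. -/
open SimpleGraph

/-- An automorphism `α` of `G` is *preserving relative to* a homomorphism `f : G →g H`
if `f (α v) = f v` for every vertex `v`.  The homomorphism `f` is *distinguishing* if the
only preserving automorphism is the identity. -/
def Distinguishing {V W : Type*} {G : SimpleGraph V} {H : SimpleGraph W} (f : G →g H) : Prop :=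
  ∀ α : G ≃g G, (∀ v, f (α v) = f v) → ∀ v, α v = v

/-- Distinguishing homomorphisms do not compose in general: there are finite graphs
`G`, `H`, `K` and distinguishing homomorphisms `f : G →g H` and `g : H →g K` whose
composition `g.comp f` is not distinguishing. -/
theorem distinguishing_not_closed_under_comp :
    ∃ (VG VH VK : Type) (_ : Fintype VG) (_ : Fintype VH) (_ : Fintype VK)
      (G : SimpleGraph VG) (H : SimpleGraph VH) (K : SimpleGraph VK)
      (f : G →g H) (g : H →g K),
      Distinguishing f ∧ Distinguishing g ∧ ¬ Distinguishing (g.comp f) := by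
  refine ⟨Bool, Fin 3, Bool, inferInstance, inferInstance, inferInstance,
    ⊥, edge 1 2, ⊤, ⟨fun b => if b then 1 else 0, fun h => h.elim⟩,
    ⟨fun v => decide (v = 2), ?_⟩, ?_, ?_, ?_⟩
  · intro a b h
    rw [edge_adj] at h
    rcases h with ⟨⟨rfl, rfl⟩ | ⟨rfl, rfl⟩, -⟩ <;> simp
  · intro α h v
    have hv : (if α v then (1 : Fin 3) else 0) = if v then 1 else 0 := h v
    revert hv
    generalize α v = w
    revert v w
    decide
  · intro α h
    have h2 : α 2 = 2 := by
      have h2 : decide (α 2 = 2) = decide ((2 : Fin 3) = 2) := h 2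
      simpa using h2
    have h1 : α 1 = 1 := by
      have hadj : (edge (1 : Fin 3) 2).Adj (α 1) (α 2) :=
        α.map_adj_iff.2 (by simp [edge_adj])
      rw [h2, edge_adj] at hadj
      simpa using hadj.1
    have h0 : α 0 = 0 := by
      have h01 : α 0 ≠ α 1 := α.injective.ne (by decide)
      have h02 : α 0 ≠ α 2 := α.injective.ne (by decide)
      rw [h1] at h01
      rw [h2] at h02
      lia
    intro v
    fin_cases v <;> assumption
  · intro h
    have hswap := h ⟨Equiv.boolNot, by simp⟩ (by intro v; cases v <;> rfl) true
    exact absurd hswap (by decide)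
end

section
/- Every existentially closed countable graph is c.e.c.: if G is a countably infinite graph such that for all disjoint finite sets A and B of vertices of G there exists a vertex z ∉ A ∪ B adjacent to every vertex of A and to no vertex of B, then G satisfies the c.e.c. property. -/
open SimpleGraph

/-- The connected existentially closed (c.e.c.) adjacency property: for all non-adjacent
vertices `u` and `v` (possibly `u = v`) and every finite set `T` of vertices containing
neither `u` nor `v`, there is a walk from `u` to `v` of length at least `2` (a path when
`u ≠ v`, and a closed walk through `u` visiting some other vertex when `u = v`) whose
internal vertices are neither equal to nor adjacent to any vertex of `T`. -/
def CEC {V : Type*} (G : SimpleGraph V) : Prop :=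
  ∀ u v : V, ¬ G.Adj u v → ∀ T : Finset V, u ∉ T → v ∉ T →
    ∃ p : G.Walk u v, 2 ≤ p.length ∧ (u ≠ v → p.IsPath) ∧
      (u = v → ∃ w ∈ p.support, w ≠ u) ∧
      ∀ w ∈ p.support, w ≠ u → w ≠ v → w ∉ T ∧ ∀ t ∈ T, ¬ G.Adj w t

/-- Every existentially closed countably infinite graph is c.e.c. -/
theorem ec_implies_cec {V : Type*} [Countable V] [Infinite V] (G : SimpleGraph V)
    (hec : ∀ A B : Finset V, Disjoint A B →
      ∃ z, z ∉ A ∧ z ∉ B ∧ (∀ a ∈ A, G.Adj z a) ∧ ∀ b ∈ B, ¬ G.Adj z b) :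
    CEC G := by
  classical
  intro u v _ T hu hv
  obtain ⟨z, -, hzT, hadj, hnadj⟩ := hec {u, v} T (by simp [hu, hv])
  have hzu : G.Adj z u := hadj u (by simp)
  have hzv : G.Adj z v := hadj v (by simp)
  refine ⟨.cons hzu.symm (.cons hzv .nil), by simp, fun huv => ?_, fun _ => ?_, ?_⟩
  · simp [Walk.cons_isPath_iff, hzv.ne, hzu.ne.symm, huv]
  · exact ⟨z, by simp, hzu.ne⟩
  · intro w hw hwu hwv
    obtain rfl : w = z := by simpa [hwu, hwv] using hw
    exact ⟨hzT, hnadj⟩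
end

section
/- The infinite random bipartite graph is c.e.c.: let G be a bipartite graph with bipartition V(G) = V₁ ∪ V₂ (all edges of G go between V₁ and V₂) such that for each i ∈ {1,2} and all disjoint finite sets A, B ⊆ Vᵢ there exist infinitely many vertices z ∈ V₃₋ᵢ adjacent to every vertex of A and to no vertex of B. Then G satisfies the c.e.c. property. -/
open SimpleGraph

/-- If every disjoint pair of finite subsets of `X` is separated by infinitely many vertices
of `Y`, and no edge joins two vertices of `Y`, then for a finite `A ⊆ X` and a finite set `T`
of arbitrary vertices disjoint from `A`, some vertex of `Y` is adjacent to all of `A` and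
neither in `T` nor adjacent to a vertex of `T`. -/
theorem exists_adj_and_avoids {V : Type*} {G : SimpleGraph V} {X Y : Set V}
    (hcover : X ∪ Y = Set.univ) (hindep : ∀ x ∈ Y, ∀ y ∈ Y, ¬ G.Adj x y)
    (hext : ∀ A B : Finset V, ↑A ⊆ X → ↑B ⊆ X → Disjoint A B →
      {z ∈ Y | (∀ a ∈ A, G.Adj z a) ∧ ∀ b ∈ B, ¬ G.Adj z b}.Infinite)
    (A T : Finset V) (hA : ↑A ⊆ X) (hAT : Disjoint A T) :
    ∃ z ∈ Y, (∀ a ∈ A, G.Adj z a) ∧ z ∉ T ∧ ∀ t ∈ T, ¬ G.Adj z t := by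
  classical
  obtain ⟨z, ⟨hzY, hzA, hzT⟩, hz⟩ := (hext A {t ∈ T | t ∈ X} hA
    (by intro t ht; simp_all) (hAT.mono_right (Finset.filter_subset _ _))).exists_notMem_finset T
  refine ⟨z, hzY, hzA, hz, fun t ht hadj => ?_⟩
  have htXY : t ∈ X ∪ Y := hcover ▸ Set.mem_univ t
  rcases htXY with htX | htY
  · exact hzT t (by simp [ht, htX]) hadj
  · exact hindep z hzY t htY hadj

/-- A vertex adjacent to both `u` and `v` and avoiding `T` yields the walk of length two
required by the c.e.c. property. -/
theorem exists_walk_of_common_neighbor {V : Type*} {G : SimpleGraph V} {u v z : V} {T : Finset V}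
    (hu : G.Adj z u) (hv : G.Adj z v) (hzT : z ∉ T) (hz : ∀ t ∈ T, ¬ G.Adj z t) :
    ∃ p : G.Walk u v, 2 ≤ p.length ∧ (u ≠ v → p.IsPath) ∧
      (u = v → ∃ w ∈ p.support, w ≠ u) ∧
      ∀ w ∈ p.support, w ≠ u → w ≠ v → w ∉ T ∧ ∀ t ∈ T, ¬ G.Adj w t := by
  refine ⟨.cons hu.symm (.cons hv .nil), by simp, fun huv => ?_, fun _ => ⟨z, by simp, hu.ne⟩, ?_⟩
  · simp [Walk.cons_isPath_iff, huv, hu.ne', hv.ne]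
  · intro w hw hwu hwv
    obtain rfl : w = z := by simpa [hwu, hwv] using hw
    exact ⟨hzT, hz⟩

/-- The c.e.c. walk from a vertex `u` of one part `X`, given the extension property for both
parts. -/
theorem exists_walk_of_mem_part {V : Type*} {G : SimpleGraph V} {X Y : Set V}
    (hcover : X ∪ Y = Set.univ)
    (hX : ∀ x ∈ X, ∀ y ∈ X, ¬ G.Adj x y) (hY : ∀ x ∈ Y, ∀ y ∈ Y, ¬ G.Adj x y)
    (hextX : ∀ A B : Finset V, ↑A ⊆ X → ↑B ⊆ X → Disjoint A B →
      {z ∈ Y | (∀ a ∈ A, G.Adj z a) ∧ ∀ b ∈ B, ¬ G.Adj z b}.Infinite)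
    (hextY : ∀ A B : Finset V, ↑A ⊆ Y → ↑B ⊆ Y → Disjoint A B →
      {z ∈ X | (∀ a ∈ A, G.Adj z a) ∧ ∀ b ∈ B, ¬ G.Adj z b}.Infinite)
    {u v : V} (hu : u ∈ X) (huv : ¬ G.Adj u v) {T : Finset V} (huT : u ∉ T) (hvT : v ∉ T) :
    ∃ p : G.Walk u v, 2 ≤ p.length ∧ (u ≠ v → p.IsPath) ∧
      (u = v → ∃ w ∈ p.support, w ≠ u) ∧
      ∀ w ∈ p.support, w ≠ u → w ≠ v → w ∉ T ∧ ∀ t ∈ T, ¬ G.Adj w t := by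
  classical
  by_cases hv : v ∈ X
  · obtain ⟨z, -, hzA, hzT, hz⟩ := exists_adj_and_avoids hcover hY hextX {u, v} T
      (by simp [Set.insert_subset_iff, hu, hv]) (by simp [huT, hvT])
    exact exists_walk_of_common_neighbor (hzA u (by simp)) (hzA v (by simp)) hzT hz
  · have hvY : v ∈ Y := (hcover ▸ Set.mem_univ v : v ∈ X ∪ Y).resolve_left hv
    obtain ⟨z, hzY, hzA, hzT, hz⟩ := exists_adj_and_avoids hcover hY hextX {u} T
      (by simpa using hu) (by simpa using huT)
    obtain ⟨w, -, hwA, hwT, hw⟩ := exists_adj_and_avoids (Set.union_comm X Y ▸ hcover) hX hextY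
      {z, v} T (by simp [Set.insert_subset_iff, hzY, hvY]) (by simp [hzT, hvT])
    have hzu : G.Adj z u := hzA u (by simp)
    have hwz : G.Adj w z := hwA z (by simp)
    have hwv : G.Adj w v := hwA v (by simp)
    have huw : u ≠ w := fun h => huv (h ▸ hwv)
    have hzv : z ≠ v := fun h => huv (h ▸ hzu.symm)
    have huv' : u ≠ v := fun h => hv (h ▸ hu)
    refine ⟨.cons hzu.symm (.cons hwz.symm (.cons hwv .nil)), by simp, fun _ => ?_,
      fun h => absurd h huv', ?_⟩
    · simp [Walk.cons_isPath_iff, huv', huw, hzv, hzu.ne', hwz.ne', hwv.ne]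
    · intro x hx hxu hxv
      obtain rfl | rfl : x = z ∨ x = w := by simpa [hxu, hxv] using hx
      · exact ⟨hzT, hz⟩
      · exact ⟨hwT, hw⟩

/-- The infinite random bipartite graph is c.e.c.: if `G` is bipartite with parts
`V₁, V₂` and for all disjoint finite sets `A, B` contained in one part there are
infinitely many vertices of the other part adjacent to all of `A` and none of `B`,
then `G` is c.e.c. -/
theorem random_bipartite_cec {V : Type*} (G : SimpleGraph V) (V₁ V₂ : Set V)
    (hcover : V₁ ∪ V₂ = Set.univ) (hdisj : Disjoint V₁ V₂)
    (hbip : ∀ x y, G.Adj x y → (x ∈ V₁ ∧ y ∈ V₂) ∨ (x ∈ V₂ ∧ y ∈ V₁))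
    (h₁ : ∀ A B : Finset V, ↑A ⊆ V₁ → ↑B ⊆ V₁ → Disjoint A B →
      {z ∈ V₂ | (∀ a ∈ A, G.Adj z a) ∧ ∀ b ∈ B, ¬ G.Adj z b}.Infinite)
    (h₂ : ∀ A B : Finset V, ↑A ⊆ V₂ → ↑B ⊆ V₂ → Disjoint A B →
      {z ∈ V₁ | (∀ a ∈ A, G.Adj z a) ∧ ∀ b ∈ B, ¬ G.Adj z b}.Infinite) :
    CEC G := by
  have hindep₁ : ∀ x ∈ V₁, ∀ y ∈ V₁, ¬ G.Adj x y := fun x hx y hy h =>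
    (hbip x y h).elim (fun h => hdisj.notMem_of_mem_left hy h.2)
      fun h => hdisj.notMem_of_mem_left hx h.1
  have hindep₂ : ∀ x ∈ V₂, ∀ y ∈ V₂, ¬ G.Adj x y := fun x hx y hy h =>
    (hbip x y h).elim (fun h => hdisj.notMem_of_mem_left h.1 hx)
      fun h => hdisj.notMem_of_mem_left h.2 hy
  intro u v huv T huT hvT
  rcases (hcover ▸ Set.mem_univ u : u ∈ V₁ ∪ V₂) with hu | hu
  · exact exists_walk_of_mem_part hcover hindep₁ hindep₂ h₁ h₂ hu huv huT hvT
  · exact exists_walk_of_mem_part (Set.union_comm V₁ V₂ ▸ hcover) hindep₂ hindep₁ h₂ h₁ hu huv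
      huT hvT
end

section
/- Let G be a countably infinite graph satisfying the c.e.c. property whose chromatic number χ(G) is finite. Then the distinguishing chromatic number of G satisfies χ_D(G) ≤ χ(G) + 2. -/
open SimpleGraph

/-- The distinguishing chromatic number of `G`: the least `n` such that `G` has a proper
`n`-colouring for which the identity is the only automorphism of `G` preserving all
colours. -/
noncomputable def distChromaticNumber {V : Type*} (G : SimpleGraph V) : ℕ∞ :=
  ⨅ n ∈ {n : ℕ | ∃ c : G.Coloring (Fin n),
      ∀ α : G ≃g G, (∀ v, c (α v) = c v) → ∀ v, α v = v}, (n : ℕ∞)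

namespace CEC

variable {V : Type*} {G : SimpleGraph V}

/-- The vertices `f 0, …, f n` are distinct and form an induced path of `G` in this order. -/
def IsInducedPath (G : SimpleGraph V) (f : ℕ → V) (n : ℕ) : Prop :=
  ∀ i j, i < j → j ≤ n → f i ≠ f j ∧ (G.Adj (f i) (f j) ↔ i + 1 = j)

/-- The sequence `f 0, …, f n, z, z, …`. -/
def snoc (f : ℕ → V) (n : ℕ) (z : V) : ℕ → V := fun i => if i ≤ n then f i else z

lemma snoc_of_le {f : ℕ → V} {n i : ℕ} {z : V} (h : i ≤ n) : snoc f n z i = f i := if_pos h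

lemma snoc_succ {f : ℕ → V} {n : ℕ} {z : V} : snoc f n z (n + 1) = z := if_neg (by omega)

lemma IsInducedPath.snoc {f : ℕ → V} {n : ℕ} {z : V} (hf : IsInducedPath G f n)
    (hz : G.Adj (f n) z) (hne : ∀ i < n, f i ≠ z) (hadj : ∀ i < n, ¬ G.Adj (f i) z) :
    IsInducedPath G (snoc f n z) (n + 1) := by
  intro i j hij hj
  rcases Nat.lt_or_ge n j with h | h
  · obtain rfl : j = n + 1 := by omega
    rw [snoc_succ, snoc_of_le (by omega)]
    rcases Nat.lt_or_ge i n with hi | hi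
    · exact ⟨hne i hi, fun h => absurd h (hadj i hi), fun h => by omega⟩
    · obtain rfl : i = n := by omega
      exact ⟨hz.ne, fun _ => rfl, fun _ => hz⟩
  · rw [snoc_of_le h, snoc_of_le (by omega)]
    exact hf i j hij h

/-- Every vertex outside a finite set `T` has a neighbour far from `T`. -/
lemma exists_adj_forall_not_adj (hG : CEC G) (x : V) (T : Finset V) (hx : x ∉ T) :
    ∃ y, G.Adj x y ∧ y ∉ T ∧ ∀ t ∈ T, ¬ G.Adj y t := by
  obtain ⟨p, hlen, -, -, hp⟩ := hG x x (G.irrefl) T hx hx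
  cases p with
  | nil => simp at hlen
  | @cons _ y _ h q => exact ⟨y, h, hp y (by simp) h.ne' h.ne'⟩

/-- A path meeting the neighbourhood of `y` has a final segment meeting it only in its
first vertex. -/
lemma exists_path_from_last_adj {a u : V} (y : V) (p : G.Walk a u) (hp : p.IsPath)
    (h : ∃ x ∈ p.support, G.Adj y x) :
    ∃ z, ∃ q : G.Walk z u, q.IsPath ∧ q.length ≤ p.length ∧ q.support ⊆ p.support ∧
      G.Adj y z ∧ ∀ x ∈ q.support, x ≠ z → ¬ G.Adj y x := by
  induction p with
  | @nil a =>
    obtain ⟨x, hx, hyx⟩ := h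
    obtain rfl : x = a := by simpa using hx
    exact ⟨x, .nil, hp, le_rfl, List.Subset.refl _, hyx, by simp⟩
  | @cons a b u hab p ih =>
    by_cases h' : ∃ x ∈ p.support, G.Adj y x
    · obtain ⟨z, q, hq, hlen, hsub, hz⟩ := ih hp.of_cons h'
      refine ⟨z, q, hq, hlen.trans (by simp), fun x hx => ?_, hz⟩
      simpa using Or.inr (hsub hx)
    · push Not at h'
      obtain ⟨x, hx, hyx⟩ := h
      rw [SimpleGraph.Walk.support_cons, List.mem_cons] at hx
      obtain rfl : x = a := hx.resolve_right fun hx => h' x hx hyx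
      refine ⟨x, p.cons hab, hp, le_rfl, List.Subset.refl _, hyx, fun w hw hwx => h' w ?_⟩
      rw [SimpleGraph.Walk.support_cons, List.mem_cons] at hw
      exact hw.resolve_left hwx

/-- An induced path can be prolonged along a walk to `u`, whose inner vertices are far from
the path and not adjacent to `v`, up to a neighbour of `u`. -/
lemma exists_extend_along {u v : V} (k : ℕ) : ∀ (f : ℕ → V) (n : ℕ) (p : G.Walk (f n) u),
    IsInducedPath G f n → p.length ≤ k → p.IsPath → f n ≠ u → ¬ G.Adj (f n) v →
    (∀ w ∈ p.support, w ≠ f n → w ≠ u →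
      (∀ i < n, f i ≠ w ∧ ¬ G.Adj (f i) w) ∧ ¬ G.Adj w v) →
    ∃ g m, IsInducedPath G g m ∧ n ≤ m ∧ (∀ i ≤ n, g i = f i) ∧
      G.Adj (g m) u ∧ ¬ G.Adj (g m) v := by
  induction k with
  | zero =>
    intro f n p _ hk _ hu
    exact absurd (SimpleGraph.Walk.eq_of_length_eq_zero (Nat.le_zero.1 hk)) hu
  | succ k ih =>
    intro f n p hf hk hp hu hv hfar
    by_cases hadj : G.Adj (f n) u
    · exact ⟨f, n, hf, le_rfl, fun _ _ => rfl, hadj, hv⟩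
    generalize hx : f n = x at p hu hv hadj hfar
    cases p with
    | nil => exact absurd rfl hu
    | @cons _ b _ hb p =>
      obtain ⟨z, q, hq, hlen, hsub, hz, hlast⟩ := exists_path_from_last_adj x p hp.of_cons
        ⟨b, p.start_mem_support, hb⟩
      have hnot : x ∉ p.support := (SimpleGraph.Walk.cons_isPath_iff hb p).1 hp |>.2
      have hzu : z ≠ u := by rintro rfl; exact hadj hz
      have hmem : ∀ w ∈ q.support, w ≠ u →
          (∀ i < n, f i ≠ w ∧ ¬ G.Adj (f i) w) ∧ ¬ G.Adj w v := fun w hw hwu =>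
        hfar w (by simpa using Or.inr (hsub hw))
          (by rintro rfl; exact hnot (hsub hw)) hwu
      have hzfar := hmem z q.start_mem_support hzu
      have hg := hf.snoc (z := z) (hx ▸ hz) (fun i hi => (hzfar.1 i hi).1)
        (fun i hi => (hzfar.1 i hi).2)
      have hend : z = snoc f n z (n + 1) := snoc_succ.symm
      obtain ⟨g, m, hgm, hnm, hagree, hgu⟩ := ih (snoc f n z) (n + 1) (q.copy hend rfl) hg
        (by simp at hk ⊢; omega) (by simpa using hq) (hend ▸ hzu) (hend ▸ hzfar.2) (by
          intro w hw hwz hwu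
          rw [SimpleGraph.Walk.support_copy] at hw
          rw [← hend] at hwz
          refine ⟨fun i hi => ?_, (hmem w hw hwu).2⟩
          rw [snoc_of_le (by omega)]
          rcases Nat.lt_or_ge i n with h | h
          · exact (hmem w hw hwu).1 i h
          · obtain rfl : i = n := by omega
            rw [hx]
            exact ⟨by rintro rfl; exact hnot (hsub hw), hlast w hw hwz⟩)
      exact ⟨g, m, hgm, by omega,
        fun i hi => by rw [hagree i (by omega), snoc_of_le hi], hgu⟩

/-- The vertices `f 0, …, f n` contain `u` or `v`, or one that is adjacent to `u` but not
to `v`. -/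
def Separates (G : SimpleGraph V) (f : ℕ → V) (n : ℕ) (u v : V) : Prop :=
  ∃ i ≤ n, f i = u ∨ f i = v ∨ (G.Adj (f i) u ∧ ¬ G.Adj (f i) v)

/-- In a c.e.c. graph, every finite induced path extends to a longer one separating `u`
from `v`. -/
lemma exists_extend_separates (hG : CEC G) {f : ℕ → V} {n : ℕ} (hf : IsInducedPath G f n)
    {u v : V} (huv : u ≠ v) :
    ∃ g m, IsInducedPath G g m ∧ n < m ∧ (∀ i ≤ n, g i = f i) ∧ Separates G g m u v := by
  classical
  obtain ⟨y, hy, hyT, hyadj⟩ := exists_adj_forall_not_adj hG (f n)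
    (((Finset.range n).image f ∪ {u, v}).erase (f n)) (by simp)
  have hyT' : ∀ t, t ≠ f n → ((∃ i < n, f i = t) ∨ t = u ∨ t = v) →
      t ≠ y ∧ ¬ G.Adj y t := by
    intro t ht h
    have hmem : t ∈ ((Finset.range n).image f ∪ {u, v}).erase (f n) := by
      simp only [Finset.mem_erase, Finset.mem_union, Finset.mem_image, Finset.mem_range,
        Finset.mem_insert, Finset.mem_singleton]
      exact ⟨ht, h⟩
    exact ⟨by rintro rfl; exact hyT hmem, hyadj t hmem⟩
  have hold : ∀ i < n, f i ≠ y ∧ ¬ G.Adj y (f i) := fun i hi =>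
    hyT' (f i) (hf i n hi le_rfl).1 (Or.inl ⟨i, hi, rfl⟩)
  have hg := hf.snoc hy (fun i hi => (hold i hi).1) (fun i hi h => (hold i hi).2 h.symm)
  by_cases hon : ∃ i ≤ n, f i = u ∨ f i = v
  · obtain ⟨i, hi, h⟩ := hon
    refine ⟨snoc f n y, n + 1, hg, by omega, fun i hi => snoc_of_le hi, i, by omega, ?_⟩
    rw [snoc_of_le hi]
    tauto
  push Not at hon
  obtain ⟨huy, hyu⟩ := hyT' u (hon n le_rfl).1.symm (by simp)
  obtain ⟨hvy, hyv⟩ := hyT' v (hon n le_rfl).2.symm (by simp)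
  have hyf : ∀ i ≤ n, f i ≠ y := fun i hi => by
    rcases hi.lt_or_eq with h | rfl
    · exact (hold i h).1
    · exact hy.ne
  obtain ⟨p, -, hpath, -, hp⟩ := hG y u hyu (insert v ((Finset.range (n + 1)).image f))
    (by
      simp only [Finset.mem_insert, Finset.mem_image, Finset.mem_range, not_or, not_exists,
        not_and]
      exact ⟨hvy.symm, fun i hi => hyf i (by omega)⟩)
    (by
      simp only [Finset.mem_insert, Finset.mem_image, Finset.mem_range, not_or, not_exists,
        not_and]
      exact ⟨huv, fun i hi => (hon i (by omega)).1⟩)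
  have hend : y = snoc f n y (n + 1) := snoc_succ.symm
  obtain ⟨g, m, hgm, hnm, hagree, hgu⟩ := exists_extend_along (v := v) p.length (snoc f n y)
    (n + 1) (p.copy hend rfl) hg (by simp) (by simpa using hpath huy.symm)
    (hend ▸ huy.symm) (hend ▸ hyv) (by
      intro w hw hwy hwu
      rw [SimpleGraph.Walk.support_copy] at hw
      rw [← hend] at hwy
      obtain ⟨hwT, hwadj⟩ := hp w hw hwy hwu
      refine ⟨fun i hi => ?_, hwadj v (by simp)⟩
      have hi' : f i ∈ insert v ((Finset.range (n + 1)).image f) :=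
        Finset.mem_insert_of_mem (Finset.mem_image_of_mem f (Finset.mem_range.2 hi))
      rw [snoc_of_le (by omega)]
      exact ⟨by rintro rfl; exact hwT hi', fun h => hwadj _ hi' h.symm⟩)
  exact ⟨g, m, hgm, by omega, fun i hi => by rw [hagree i (by omega), snoc_of_le hi],
    m, le_rfl, Or.inr (Or.inr hgu)⟩

/-- A countable nonempty c.e.c. graph has an induced ray separating all pairs of vertices
outside it. -/
lemma exists_separating_ray [Countable V] [Nonempty V] (hG : CEC G) :
    ∃ F : ℕ → V, (∀ n, IsInducedPath G F n) ∧
      ∀ u v, u ≠ v → ∃ n, Separates G F n u v := by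
  obtain ⟨e, he⟩ := exists_surjective_nat (V × V)
  let S := {s : (ℕ → V) × ℕ // IsInducedPath G s.1 s.2}
  have hstep : ∀ (s : S) (k : ℕ), ∃ t : S, s.1.2 < t.1.2 ∧
      (∀ i ≤ s.1.2, t.1.1 i = s.1.1 i) ∧
      ((e k).1 ≠ (e k).2 → Separates G t.1.1 t.1.2 (e k).1 (e k).2) := by
    rintro ⟨⟨f, n⟩, hf⟩ k
    by_cases huv : (e k).1 = (e k).2
    · obtain ⟨y, hy⟩ : ∃ y, y ≠ (e k).1 :=
        let ⟨y, hy, _⟩ := exists_adj_forall_not_adj hG (e k).1 ∅ (by simp)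
        ⟨y, hy.ne'⟩
      obtain ⟨g, m, hg, hm, hagree, -⟩ := exists_extend_separates hG hf hy
      exact ⟨⟨(g, m), hg⟩, hm, hagree, fun h => absurd huv h⟩
    · obtain ⟨g, m, hg, hm, hagree, hs⟩ := exists_extend_separates hG hf huv
      exact ⟨⟨(g, m), hg⟩, hm, hagree, fun _ => hs⟩
  choose next hlt hagree hsep using hstep
  let x₀ : V := Classical.arbitrary V
  let s₀ : S := ⟨(fun _ => x₀, 0), fun i j hij hj => by simp at hj; omega⟩
  let s : ℕ → S := fun k => Nat.rec s₀ (fun k t => next t k) k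
  have hs : ∀ k, s (k + 1) = next (s k) k := fun _ => rfl
  have hlen : ∀ k, k ≤ (s k).1.2 := by
    intro k
    induction k with
    | zero => exact Nat.zero_le _
    | succ k ih => have := hlt (s k) k; rw [hs]; omega
  have hmono : ∀ k l, k ≤ l → (s k).1.2 ≤ (s l).1.2 ∧
      ∀ i ≤ (s k).1.2, (s l).1.1 i = (s k).1.1 i := by
    intro k l hkl
    induction l, hkl using Nat.le_induction with
    | base => exact ⟨le_rfl, fun _ _ => rfl⟩
    | succ l hkl ih =>
      rw [hs]
      exact ⟨ih.1.trans (hlt _ _).le, fun i hi =>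
        (hagree _ _ i (hi.trans ih.1)).trans (ih.2 i hi)⟩
  have hF : ∀ k i, i ≤ (s k).1.2 → (s i).1.1 i = (s k).1.1 i := by
    intro k i hi
    rcases le_total i k with h | h
    · exact ((hmono i k h).2 i (hlen i)).symm
    · exact (hmono k i h).2 i hi
  refine ⟨fun i => (s i).1.1 i, fun n i j hij hj => ?_, fun u v huv => ?_⟩
  · have hjn := hj.trans (hlen n)
    simp only [hF n i (hij.le.trans hjn), hF n j hjn]
    exact (s n).2 i j hij hjn
  · obtain ⟨k, hk⟩ := he (u, v)
    obtain ⟨i, hi, h⟩ := hsep (s k) k (by simpa [hk] using huv)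
    rw [← hs] at hi h
    refine ⟨i, i, le_rfl, ?_⟩
    simp only [hF (k + 1) i hi]
    simpa [hk] using h

/-- The one-way infinite path has no nontrivial automorphism. -/
lemma eq_id_of_ray_automorphism {σ : ℕ → ℕ} (hσ : Function.Bijective σ)
    (hadj : ∀ i j, (σ i + 1 = σ j ∨ σ j + 1 = σ i) ↔ (i + 1 = j ∨ j + 1 = i)) (i : ℕ) :
    σ i = i := by
  induction i using Nat.strong_induction_on with
  | _ i ih =>
    rcases i with _ | _ | i
    · by_contra h0
      obtain ⟨a, ha⟩ := hσ.2 (σ 0 - 1)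
      obtain ⟨b, hb⟩ := hσ.2 (σ 0 + 1)
      have h1 := (hadj 0 a).1 (by omega)
      have h2 := (hadj 0 b).1 (by omega)
      have hab : a = b := by omega
      rw [hab] at ha
      omega
    · have h0 := ih 0 (by omega)
      have := (hadj 0 1).2 (by omega)
      show σ 1 = 1
      omega
    · have h0 := ih i (by omega)
      have h1 := ih (i + 1) (by omega)
      have h2 := (hadj (i + 1) (i + 2)).2 (by omega)
      have h3 : σ i ≠ σ (i + 2) := fun h => by have := hσ.1 h; omega
      show σ (i + 2) = i + 2
      omega

/-- An automorphism preserving an induced ray and its complement fixes the ray pointwise. -/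
lemma apply_ray_eq {F : ℕ → V} (hF : ∀ n, IsInducedPath G F n) (α : G ≃g G)
    (hα : ∀ v, α v ∈ Set.range F ↔ v ∈ Set.range F) (i : ℕ) : α (F i) = F i := by
  have hinj : Function.Injective F := fun i j h => by
    rcases lt_trichotomy i j with hij | hij | hij
    · exact absurd h (hF j i j hij le_rfl).1
    · exact hij
    · exact absurd h.symm (hF i j i hij le_rfl).1
  have hadj : ∀ i j, G.Adj (F i) (F j) ↔ (i + 1 = j ∨ j + 1 = i) := fun i j => by
    rcases lt_trichotomy i j with hij | rfl | hij
    · rw [(hF j i j hij le_rfl).2]; omega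
    · simp
    · rw [G.adj_comm, (hF i j i hij le_rfl).2]; omega
  choose σ hσ using fun i => (hα (F i)).2 ⟨i, rfl⟩
  have hbij : Function.Bijective σ := by
    refine ⟨fun i j h => hinj (α.injective ?_), fun j => ?_⟩
    · rw [← hσ, ← hσ, h]
    · obtain ⟨i, hi⟩ := (hα (α.symm (F j))).1 ⟨j, by simp⟩
      exact ⟨i, hinj (by rw [hσ, hi]; simp)⟩
  have hid := eq_id_of_ray_automorphism hbij (fun i j => by
    rw [← hadj, ← hadj, hσ, hσ, α.map_adj_iff]) i
  rw [← hσ, hid]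

end CEC

/-- If `G` is a countably infinite c.e.c. graph with finite chromatic number, then
`χ_D(G) ≤ χ(G) + 2`. -/
theorem cec_distChromaticNumber_le {V : Type*} [Countable V] [Infinite V]
    (G : SimpleGraph V) (hG : CEC G) (hchrom : G.chromaticNumber ≠ ⊤) :
    distChromaticNumber G ≤ G.chromaticNumber + 2 := by
  classical
  obtain ⟨n, hn⟩ := ENat.ne_top_iff_exists.1 hchrom
  have hcol : G.Colorable n := SimpleGraph.chromaticNumber_le_iff_colorable.1 hn.ge
  obtain ⟨c₀⟩ := hcol
  obtain ⟨F, hF, hsep⟩ := CEC.exists_separating_ray hG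
  let d : V → Fin n ⊕ Fin 2 := fun v =>
    if h : ∃ i, F i = v then Sum.inr (Fin.ofNat 2 h.choose) else Sum.inl (c₀ v)
  have hd : ∀ {u v}, G.Adj u v → d u ≠ d v := by
    intro u v huv
    by_cases hu : ∃ i, F i = u <;> by_cases hv : ∃ i, F i = v
    · simp only [d, dif_pos hu, dif_pos hv]
      have hi := hu.choose_spec
      have hj := hv.choose_spec
      generalize hu.choose = i at hi
      generalize hv.choose = j at hj
      subst hi hj
      have hij : i + 1 = j ∨ j + 1 = i := by
        rcases lt_trichotomy i j with hij | rfl | hij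
        · exact Or.inl ((hF j i j hij le_rfl).2.1 huv)
        · exact absurd huv G.irrefl
        · exact Or.inr ((hF i j i hij le_rfl).2.1 huv.symm)
      simp only [ne_eq, Sum.inr.injEq, Fin.ext_iff, Fin.val_ofNat]
      omega
    · simp [d, hu, hv]
    · simp [d, hu, hv]
    · simpa [d, hu, hv] using c₀.valid huv
  have hrange : ∀ v, v ∈ Set.range F ↔ (d v).isRight := fun v => by
    by_cases hv : ∃ i, F i = v <;> simp [d, hv]
  rw [← hn]
  refine iInf₂_le (n + 2) ⟨SimpleGraph.Coloring.mk (fun v => finSumFinEquiv (d v))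
    (fun huv h => hd huv (finSumFinEquiv.injective h)), fun α hα v => ?_⟩
  have hdα : ∀ v, d (α v) = d v := fun v => finSumFinEquiv.injective (hα v)
  have hfix := CEC.apply_ray_eq hF α fun v => by rw [hrange, hrange, hdα]
  by_contra hv
  obtain ⟨-, i, -, h | h | ⟨h, h'⟩⟩ := hsep v (α v) (Ne.symm hv)
  · exact hv (h ▸ hfix i)
  · exact hv (α.injective (h ▸ hfix i))
  · exact h' (hfix i ▸ α.map_adj_iff.2 h)
end
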